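/- arXiv:2511.12327 — 3 statements merged into one kernel-verified Lean document; each statement's English description precedes it below -/
import Mathlib

section
/- Let X ⊆ ℝ be such that (X[≤])² is a normal topological space. If there exists a strictly decreasing function f : X → X (not necessarily continuous with respect to the Euclidean topology), then there is a countable set C ⊆ X such that X \ C is a Q-set. -/
/-- The Sorgenfrey (lower limit) topology on `ℝ`, generated by half-open
intervals `[a, b)` with `a < b`. -/
def sorgenfrey : TopologicalSpace ℝ :=
  TopologicalSpace.generateFrom {s : Set ℝ | ∃ a b : ℝ, a < b ∧ s = Set.Ico a b}

/-- The Sorgenfrey subspace topology on a set of reals `X`, i.e. `X[≤]`. -/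
def sorgenfreySub (X : Set ℝ) : TopologicalSpace X :=
  sorgenfrey.induced Subtype.val

/-- The product topology `(X[≤])²` on `X × X`. -/
def sorgenfreySq (X : Set ℝ) : TopologicalSpace (X × X) :=
  @instTopologicalSpaceProd X X (sorgenfreySub X) (sorgenfreySub X)

/-- A set of reals `X` is a Q-set if every subset of `X` is a relative `Gδ`-set
in `X` with respect to the Euclidean subspace topology. -/
def IsQSet (X : Set ℝ) : Prop :=
  ∀ A : Set ℝ, A ⊆ X → IsGδ (Subtype.val ⁻¹' A : Set X)

open Topology

theorem sorg_nhd (U : Set ℝ) (hU : IsOpen[sorgenfrey] U) :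
    ∀ x ∈ U, ∃ ε > 0, Set.Ico x (x + ε) ⊆ U := by
  induction hU with
  | basic s hs =>
    obtain ⟨a, b, hab, rfl⟩ := hs
    intro x hx
    refine ⟨b - x, by linarith [hx.2], ?_⟩
    intro y hy
    exact ⟨hx.1.trans hy.1, by linarith [hy.2]⟩
  | univ => exact fun x _ => ⟨1, one_pos, Set.subset_univ _⟩
  | inter s t _ _ h1 h2 =>
    intro x hx
    obtain ⟨e, he, h⟩ := h1 x hx.1
    obtain ⟨d, hd, h'⟩ := h2 x hx.2
    refine ⟨min e d, lt_min he hd, fun y hy => ⟨h ⟨hy.1, ?_⟩, h' ⟨hy.1, ?_⟩⟩⟩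
    · linarith [hy.2, min_le_left e d]
    · linarith [hy.2, min_le_right e d]
  | sUnion S _ ih =>
    rintro x ⟨s, hs, hx⟩
    obtain ⟨e, he, h⟩ := ih s hs x hx
    exact ⟨e, he, h.trans (Set.subset_sUnion_of_mem hs)⟩

theorem sorg_sq_nhd (X : Set ℝ) (U : Set (X × X)) (hU : IsOpen[sorgenfreySq X] U)
    (p : X × X) (hp : p ∈ U) : ∃ ε > 0, ∀ q : X × X, (p.1 : ℝ) ≤ q.1 → (q.1 : ℝ) < p.1 + ε →
      (p.2 : ℝ) ≤ q.2 → (q.2 : ℝ) < p.2 + ε → q ∈ U := by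
  obtain ⟨u, v, hu, hv, hpu, hpv, huv⟩ :=
    (@isOpen_prod_iff X X (sorgenfreySub X) (sorgenfreySub X) U).1 hU p.1 p.2 hp
  obtain ⟨u', hu', rfl⟩ := hu
  obtain ⟨v', hv', rfl⟩ := hv
  obtain ⟨e, he, h⟩ := sorg_nhd u' hu' _ hpu
  obtain ⟨d, hd, h'⟩ := sorg_nhd v' hv' _ hpv
  refine ⟨min e d, lt_min he hd, fun q h1 h2 h3 h4 => huv ⟨h ⟨h1, ?_⟩, h' ⟨h3, ?_⟩⟩⟩
  · linarith [min_le_left e d]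
  · linarith [min_le_right e d]

theorem sorg_sq_open (X : Set ℝ) (U : Set (X × X))
    (H : ∀ p ∈ U, ∃ ε > 0, ∀ q : X × X, (p.1 : ℝ) ≤ q.1 → (q.1 : ℝ) < p.1 + ε →
      (p.2 : ℝ) ≤ q.2 → (q.2 : ℝ) < p.2 + ε → q ∈ U) : IsOpen[sorgenfreySq X] U := by
  refine (@isOpen_prod_iff X X (sorgenfreySub X) (sorgenfreySub X) U).2 ?_
  intro a b hab
  obtain ⟨e, he, h⟩ := H _ hab
  have ho : ∀ c : ℝ, IsOpen[sorgenfreySub X] (Subtype.val ⁻¹' Set.Ico c (c + e)) := fun c =>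
    ⟨_, TopologicalSpace.isOpen_generateFrom_of_mem ⟨c, c + e, by linarith, rfl⟩, rfl⟩
  refine ⟨_, _, ho a, ho b, ⟨le_rfl, ?_⟩, ⟨le_rfl, ?_⟩, ?_⟩
  · linarith
  · linarith
  · rintro q ⟨hq1, hq2⟩
    exact h q hq1.1 hq1.2 hq2.1 hq2.2

theorem graph_sep (X : Set ℝ) (f : ℝ → ℝ) (hfa : StrictAntiOn f X) (S : Set ℝ) (hS : S ⊆ X)
    (a b : ℝ) (hab : ¬ (a ∈ S ∧ b = f a)) :
    ∃ ε > 0, ∀ x ∈ S, a ≤ x → x < a + ε → b ≤ f x → f x < b + ε → False := by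
  by_contra! hcon
  have key : ∀ x ∈ S, ∀ y ∈ S, f x < f y → y < x := fun x hx y hy h =>
    (hfa.lt_iff_gt (hS hx) (hS hy)).1 h
  have key' : ∀ x ∈ S, ∀ y ∈ S, y < x → f x < f y := fun x hx y hy h =>
    hfa (hS hy) (hS hx) h
  have fin : ∀ x ∈ S, a < x → b < f x → False := by
    intro x hx h1 h2
    obtain ⟨y, hy, h3, h4, h5, h6, -⟩ := hcon (min (x - a) (f x - b))
      (lt_min (by linarith) (by linarith))
    have := key' x hx y hy (by linarith [min_le_left (x - a) (f x - b)])
    linarith [min_le_right (x - a) (f x - b)]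
  have hA : a ∈ S → b ≤ f a → b < f a := fun h h' => lt_of_le_of_ne h' (fun e => hab ⟨h, e⟩)
  have h2 : ∃ x ∈ S, a < x ∧ b ≤ f x := by
    obtain ⟨x, hx, h3, h4, h5, h6, -⟩ := hcon 1 one_pos
    rcases h3.lt_or_eq with h | rfl
    · exact ⟨x, hx, h, h5⟩
    · have := hA hx h5
      obtain ⟨y, hy, h3, h4, h5, h6, -⟩ := hcon (f a - b) (by linarith)
      exact ⟨y, hy, key y hy a hx (by linarith), h5⟩
  obtain ⟨x, hx, hax, hbx⟩ := h2
  obtain ⟨y, hy, h3, h4, h5, h6, -⟩ := hcon (x - a) (by linarith)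
  have hyx := key' x hx y hy (by linarith)
  rcases h3.lt_or_eq with h | rfl
  · exact fin y hy h (by linarith)
  · obtain ⟨z, hz, h3, h4, h5, h6, -⟩ := hcon (min (x - a) (f a - b))
      (lt_min (by linarith) (by linarith))
    have h7 := key z hz a hy (by linarith [min_le_right (x - a) (f a - b)])
    have h8 := key' x hx z hz (by linarith [min_le_left (x - a) (f a - b)])
    exact fin z hz h7 (by linarith)

theorem graph_closed (X : Set ℝ) (f : ℝ → ℝ) (hfa : StrictAntiOn f X) (S : Set ℝ) (hS : S ⊆ X) :
    IsClosed[sorgenfreySq X] {p : X × X | (p.1 : ℝ) ∈ S ∧ (p.2 : ℝ) = f p.1} := by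
  refine (@isOpen_compl_iff _ _ (sorgenfreySq X)).1 (sorg_sq_open X _ ?_)
  intro p hp
  obtain ⟨e, he, h⟩ := graph_sep X f hfa S hS p.1 p.2 hp
  refine ⟨e, he, fun q h1 h2 h3 h4 hq => ?_⟩
  obtain ⟨hq1, hq2⟩ := hq
  rw [hq2] at h3 h4
  exact h _ hq1 h1 h2 h3 h4

theorem stmt3 (X : Set ℝ) (hnorm : @NormalSpace (X × X) (sorgenfreySq X))
    (f : ℝ → ℝ) (hfa : StrictAntiOn f X) (hfm : Set.MapsTo f X X) :
    ∃ C : Set ℝ, C.Countable ∧ C ⊆ X ∧ IsQSet (X \ C) := by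
  refine ⟨{x ∈ X | ¬ ContinuousWithinAt f X x}, hfa.antitoneOn.countable_not_continuousWithinAt,
    fun x hx => hx.1, ?_⟩
  set C := {x ∈ X | ¬ ContinuousWithinAt f X x} with hC
  intro A hA
  set B := X \ A with hB
  have hAX : A ⊆ X := fun x hx => (hA hx).1
  obtain ⟨U, V, hU, hV, hBU, hAV, hUV⟩ := @NormalSpace.normal _ (sorgenfreySq X) hnorm _ _
    (graph_closed X f hfa B Set.sdiff_subset) (graph_closed X f hfa A hAX) (by
      rw [Set.disjoint_left]
      rintro p ⟨hp, -⟩ ⟨hp', -⟩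
      exact hp.2 hp')
  let Bn : ℕ → Set ↥(X \ C) := fun n => {x | ∀ q : X × X, (x : ℝ) ≤ q.1 →
    (q.1 : ℝ) < x + 1 / ((n : ℝ) + 1) → f x ≤ q.2 → (q.2 : ℝ) < f x + 1 / ((n : ℝ) + 1) → q ∈ U}
  have heq : (Subtype.val ⁻¹' A : Set ↥(X \ C)) = ⋂ n, (closure (Bn n))ᶜ := by
    ext y
    simp only [Set.mem_preimage, Set.mem_iInter, Set.mem_compl_iff]
    constructor
    · intro hy n hcl
      have hyX : (y : ℝ) ∈ X := y.2.1
      have hc : ContinuousWithinAt f X y := by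
        by_contra h
        exact y.2.2 ⟨hyX, h⟩
      obtain ⟨e, he, h⟩ := sorg_sq_nhd X V hV (⟨y, hyX⟩, ⟨f y, hfm hyX⟩) (hAV ⟨hy, rfl⟩)
      have hn : (0 : ℝ) < 1 / ((n : ℝ) + 1) := by positivity
      set r := 1 / ((n : ℝ) + 1) with hr
      have hm : 0 < min e r := lt_min he hn
      obtain ⟨δ, hδ, hcδ⟩ := Metric.continuousWithinAt_iff.1 hc (min e r) hm
      obtain ⟨x, hx, hxy⟩ := Metric.mem_closure_iff.1 hcl (min δ (min e r)) (lt_min hδ hm)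
      have hxX : (x : ℝ) ∈ X := x.2.1
      rw [dist_comm, Subtype.dist_eq] at hxy
      have hf := hcδ hxX (hxy.trans_le (min_le_left _ _))
      have hxy' := hxy.trans_le (min_le_right _ _)
      rw [Real.dist_eq, abs_lt] at hf hxy'
      have m1 := min_le_left e r
      have m2 := min_le_right e r
      have q1 : ∃ z ∈ X, ((x : ℝ) ≤ z ∧ z < x + r) ∧ ((y : ℝ) ≤ z ∧ z < y + e) := by
        rcases le_total (x : ℝ) y with h | h
        · exact ⟨y, hyX, ⟨h, by linarith⟩, ⟨le_rfl, by linarith⟩⟩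
        · exact ⟨x, hxX, ⟨le_rfl, by linarith⟩, ⟨h, by linarith⟩⟩
      have q2 : ∃ z ∈ X, (f x ≤ z ∧ z < f x + r) ∧ (f y ≤ z ∧ z < f y + e) := by
        rcases le_total (f x) (f y) with h | h
        · exact ⟨f y, hfm hyX, ⟨h, by linarith⟩, ⟨le_rfl, by linarith⟩⟩
        · exact ⟨f x, hfm hxX, ⟨le_rfl, by linarith⟩, ⟨h, by linarith⟩⟩
      obtain ⟨z, hz, ⟨a1, a2⟩, a3, a4⟩ := q1
      obtain ⟨w, hw, ⟨b1, b2⟩, b3, b4⟩ := q2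
      exact Set.disjoint_left.1 hUV (hx (⟨z, hz⟩, ⟨w, hw⟩) a1 a2 b1 b2)
        (h (⟨z, hz⟩, ⟨w, hw⟩) a3 a4 b3 b4)
    · intro h
      by_contra hy
      have hyX : (y : ℝ) ∈ X := y.2.1
      obtain ⟨e, he, h'⟩ := sorg_sq_nhd X U hU (⟨y, hyX⟩, ⟨f y, hfm hyX⟩)
        (hBU ⟨⟨hyX, hy⟩, rfl⟩)
      obtain ⟨n, hn⟩ := exists_nat_one_div_lt he
      refine h n (subset_closure ?_)
      intro q h1 h2 h3 h4
      exact h' q h1 (by simp only; linarith) h3 (by simp only; linarith)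
  rw [heq]
  exact IsGδ.iInter fun n => isClosed_closure.isOpen_compl.isGδ
end

section
/- Let X ⊆ ℝ, let B ⊆ X × X be closed in (X[≤])², and let W ⊆ X × X be such that p₀(W) ∩ p₀(B) = ∅ and p₁(W) ∩ p₁(B) = ∅, where p₀, p₁ : X × X → X are the coordinate projections. Suppose that both X \ p₀(B) and X \ p₁(B) can be written as countable unions of subsets of X that are relatively closed in X with respect to the Euclidean subspace topology. Then W has the covering property with respect to B in (X[≤])². -/
/-- `A` has the covering property with respect to `B`: there is a countable
family of open sets covering `A` whose closures are disjoint from `B`. -/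
def CoveringProperty {Z : Type*} [TopologicalSpace Z] (A B : Set Z) : Prop :=
  ∃ U : ℕ → Set Z, (∀ n, IsOpen (U n)) ∧ A ⊆ ⋃ n, U n ∧
    ∀ n, closure (U n) ∩ B = ∅

theorem sorg_Ico_open (a b : ℝ) : @IsOpen _ sorgenfrey (Set.Ico a b) := by
  by_cases h : a < b
  · exact TopologicalSpace.isOpen_generateFrom_of_mem ⟨a, b, h, rfl⟩
  · rw [Set.Ico_eq_empty h]; exact @isOpen_empty _ sorgenfrey

theorem sorg_open_ball (V : Set ℝ) (hV : @IsOpen _ sorgenfrey V) :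
    ∀ x ∈ V, ∃ e > 0, Set.Ico x (x + e) ⊆ V := by
  change TopologicalSpace.GenerateOpen _ V at hV
  induction hV with
  | basic s hs =>
    obtain ⟨a, b, hab, rfl⟩ := hs
    intro x hx
    refine ⟨b - x, by linarith [hx.2], fun y hy => ⟨hx.1.trans hy.1, by linarith [hy.2]⟩⟩
  | univ => exact fun x _ => ⟨1, one_pos, Set.subset_univ _⟩
  | inter s t _ _ h1 h2 =>
    intro x hx
    obtain ⟨e, he, h⟩ := h1 x hx.1
    obtain ⟨e', he', h'⟩ := h2 x hx.2
    refine ⟨min e e', lt_min he he', fun y hy => ⟨h ⟨hy.1, ?_⟩, h' ⟨hy.1, ?_⟩⟩⟩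
    · linarith [hy.2, min_le_left e e']
    · linarith [hy.2, min_le_right e e']
  | sUnion S _ ih =>
    rintro x ⟨s, hs, hx⟩
    obtain ⟨e, he, h⟩ := ih s hs x hx
    exact ⟨e, he, h.trans (Set.subset_sUnion_of_mem hs)⟩

def sbox {X : Set ℝ} (p : X × X) (e : ℝ) : Set (X × X) :=
  {q | (q.1 : ℝ) ∈ Set.Ico (p.1 : ℝ) (p.1 + e) ∧ (q.2 : ℝ) ∈ Set.Ico (p.2 : ℝ) (p.2 + e)}

theorem sbox_open {X : Set ℝ} (p : X × X) (e : ℝ) : @IsOpen _ (sorgenfreySq X) (sbox p e) := by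
  have h : ∀ a b : ℝ, @IsOpen _ (sorgenfreySub X) (Subtype.val ⁻¹' Set.Ico a b) :=
    fun a b => ⟨_, sorg_Ico_open a b, rfl⟩
  exact @IsOpen.prod _ _ (sorgenfreySub X) (sorgenfreySub X) _ _ (h _ _) (h _ _)

theorem sbox_mem {X : Set ℝ} (p : X × X) {e : ℝ} (he : 0 < e) : p ∈ sbox p e :=
  ⟨⟨le_rfl, by linarith⟩, ⟨le_rfl, by linarith⟩⟩

theorem sq_open_of {X : Set ℝ} (U : Set (X × X)) (h : ∀ p ∈ U, ∃ e > 0, sbox p e ⊆ U) :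
    @IsOpen _ (sorgenfreySq X) U := by
  let := sorgenfreySq X
  rw [isOpen_iff_forall_mem_open]
  intro p hp
  obtain ⟨e, he, hs⟩ := h p hp
  exact ⟨_, hs, sbox_open p e, sbox_mem p he⟩

theorem sq_open_box {X : Set ℝ} (U : Set (X × X)) (hU : @IsOpen _ (sorgenfreySq X) U) :
    ∀ p ∈ U, ∃ e > 0, sbox p e ⊆ U := by
  rintro ⟨x, y⟩ hp
  obtain ⟨u, v, hu, hv, hxu, hyv, huv⟩ :=
    (@isOpen_prod_iff _ _ (sorgenfreySub X) (sorgenfreySub X) _).1 hU x y hp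
  obtain ⟨u', hu', rfl⟩ := hu
  obtain ⟨v', hv', rfl⟩ := hv
  obtain ⟨e, he, h⟩ := sorg_open_ball _ hu' x hxu
  obtain ⟨e', he', h'⟩ := sorg_open_ball _ hv' y hyv
  refine ⟨min e e', lt_min he he', fun q hq => huv ⟨h ⟨hq.1.1, ?_⟩, h' ⟨hq.2.1, ?_⟩⟩⟩
  · have := hq.1.2
    simp only at this
    linarith [min_le_left e e']
  · have := hq.2.2
    simp only at this
    linarith [min_le_right e e']

theorem floor_box (c : ℝ) (hc : 0 < c) (x : ℝ) :
    ∃ e > 0, ∀ y ∈ Set.Ico x (x + e), ⌊y * c⌋ = ⌊x * c⌋ := by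
  refine ⟨(⌊x * c⌋ + 1 - x * c) / c, div_pos (by linarith [Int.lt_floor_add_one (x * c)]) hc, ?_⟩
  rintro y ⟨h1, h2⟩
  rw [Int.floor_eq_iff]
  constructor
  · exact (Int.floor_le _).trans (by gcongr)
  · have : (y - x) < (⌊x * c⌋ + 1 - x * c) / c := by linarith
    rw [lt_div_iff₀ hc] at this
    linarith

theorem floor_close (c : ℝ) (hc : 0 < c) (x y : ℝ) (h : ⌊x * c⌋ = ⌊y * c⌋) : y < x + 1 / c := by
  have h1 := Int.floor_le (x * c)
  have h2 := Int.lt_floor_add_one (y * c)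
  rw [h] at h1
  have : (y - x) < 1 / c := by
    rw [lt_div_iff₀ hc]; linarith
  linarith

theorem closed_gap {X : Set ℝ} (F : Set X) (hF : IsClosed F) (s : X) (hs : s ∉ F) :
    ∃ e > 0, ∀ x ∈ F, (x : ℝ) < s + e → (x : ℝ) < s := by
  obtain ⟨e, he, h⟩ := Metric.isOpen_iff.1 hF.isOpen_compl s hs
  refine ⟨e, he, fun x hx hlt => ?_⟩
  by_contra hn
  refine h (show x ∈ Metric.ball s e from ?_) hx
  rw [Metric.mem_ball, Subtype.dist_eq, Real.dist_eq, abs_lt]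
  constructor <;> linarith

theorem stmt14 (X : Set ℝ) (B W : Set (X × X))
    (hB : @IsClosed _ (sorgenfreySq X) B)
    (h0 : Prod.fst '' W ∩ Prod.fst '' B = ∅)
    (h1 : Prod.snd '' W ∩ Prod.snd '' B = ∅)
    (hF : ∃ F : ℕ → Set X, (∀ n, IsClosed (F n)) ∧
      Set.univ \ Prod.fst '' B = ⋃ n, F n)
    (hH : ∃ H : ℕ → Set X, (∀ n, IsClosed (H n)) ∧
      Set.univ \ Prod.snd '' B = ⋃ n, H n) :
    @CoveringProperty _ (sorgenfreySq X) W B := by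
  obtain ⟨F, hFc, hF⟩ := hF
  obtain ⟨H, hHc, hH⟩ := hH
  obtain ⟨g, hg⟩ := exists_surjective_nat (ℕ × ℕ × ℕ × ℤ × ℤ)
  let U : ℕ × ℕ × ℕ × ℤ × ℤ → Set (X × X) := fun ⟨n, m, k, i, j⟩ =>
    {p | ⌊(p.1 : ℝ) * (k + 1)⌋ = i ∧ ⌊(p.2 : ℝ) * (k + 1)⌋ = j ∧
      ∃ w : X × X, w.1 ∈ F n ∧ w.2 ∈ H m ∧ sbox w (1 / (k + 1)) ⊆ Bᶜ ∧
        ⌊(w.1 : ℝ) * (k + 1)⌋ = i ∧ ⌊(w.2 : ℝ) * (k + 1)⌋ = j ∧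
        (w.1 : ℝ) ≤ p.1 ∧ (w.2 : ℝ) ≤ p.2}
  refine ⟨fun n => U (g n), fun n => ?_, ?_, fun n => ?_⟩
  · beta_reduce
    generalize g n = z
    obtain ⟨n, m, k, i, j⟩ := z
    apply sq_open_of
    rintro p ⟨hi, hj, w, hw1, hw2, hw, hwi, hwj, hwp1, hwp2⟩
    have hk : (0 : ℝ) < k + 1 := by positivity
    obtain ⟨e, he, h⟩ := floor_box _ hk p.1
    obtain ⟨e', he', h'⟩ := floor_box _ hk p.2
    refine ⟨min e e', lt_min he he', ?_⟩
    rintro q ⟨⟨q1, q2⟩, q3, q4⟩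
    refine ⟨(h _ ⟨q1, ?_⟩).trans hi, (h' _ ⟨q3, ?_⟩).trans hj, w, hw1, hw2, hw, hwi, hwj,
      hwp1.trans q1, hwp2.trans q3⟩
    · linarith [min_le_left e e']
    · linarith [min_le_right e e']
  · intro w hw
    have a0 : w.1 ∉ Prod.fst '' B := fun h => by
      have : w.1 ∈ Prod.fst '' W ∩ Prod.fst '' B := ⟨⟨w, hw, rfl⟩, h⟩
      rw [h0] at this; exact this
    have a1 : w.2 ∉ Prod.snd '' B := fun h => by
      have : w.2 ∈ Prod.snd '' W ∩ Prod.snd '' B := ⟨⟨w, hw, rfl⟩, h⟩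
      rw [h1] at this; exact this
    have b0 : w.1 ∈ ⋃ n, F n := hF ▸ ⟨trivial, a0⟩
    have b1 : w.2 ∈ ⋃ n, H n := hH ▸ ⟨trivial, a1⟩
    obtain ⟨n, hn⟩ := Set.mem_iUnion.1 b0
    obtain ⟨m, hm⟩ := Set.mem_iUnion.1 b1
    obtain ⟨e, he, hbox⟩ := sq_open_box _ hB.isOpen_compl w (fun h => a0 ⟨w, h, rfl⟩)
    obtain ⟨k, hk⟩ := exists_nat_one_div_lt he
    obtain ⟨N, hN⟩ := hg (n, m, k, ⌊(w.1 : ℝ) * (k + 1)⌋, ⌊(w.2 : ℝ) * (k + 1)⌋)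
    refine Set.mem_iUnion.2 ⟨N, ?_⟩
    simp only [hN]
    refine ⟨rfl, rfl, w, hn, hm, ?_, rfl, rfl, le_rfl, le_rfl⟩
    rintro q ⟨⟨q1, q2⟩, q3, q4⟩
    exact hbox ⟨⟨q1, by linarith⟩, q3, by linarith⟩
  · beta_reduce
    generalize g n = z
    obtain ⟨n, m, k, i, j⟩ := z
    rw [Set.eq_empty_iff_forall_notMem]
    rintro p ⟨hpc, hpB⟩
    have hk : (0 : ℝ) < k + 1 := by positivity
    have c0 : p.1 ∉ F n := fun h => by
      have : p.1 ∈ Set.univ \ Prod.fst '' B := hF ▸ Set.mem_iUnion.2 ⟨n, h⟩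
      exact this.2 ⟨p, hpB, rfl⟩
    have c1 : p.2 ∉ H m := fun h => by
      have : p.2 ∈ Set.univ \ Prod.snd '' B := hH ▸ Set.mem_iUnion.2 ⟨m, h⟩
      exact this.2 ⟨p, hpB, rfl⟩
    obtain ⟨e1, he1, g1⟩ := closed_gap _ (hFc n) _ c0
    obtain ⟨e2, he2, g2⟩ := closed_gap _ (hHc m) _ c1
    obtain ⟨e3, he3, g3⟩ := floor_box _ hk p.1
    obtain ⟨e4, he4, g4⟩ := floor_box _ hk p.2
    obtain ⟨e, he, l1, l2, l3, l4⟩ : ∃ e > 0, e ≤ e1 ∧ e ≤ e2 ∧ e ≤ e3 ∧ e ≤ e4 :=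
      ⟨min (min e1 e2) (min e3 e4), by positivity, by simp, by simp, by simp, by simp⟩
    obtain ⟨q, ⟨⟨q1, q2⟩, q3, q4⟩, hi, hj, w, hw1, hw2, hw, hwi, hwj, hwp1, hwp2⟩ :=
      (@mem_closure_iff _ (sorgenfreySq X) _ _).1 hpc _ (sbox_open p e) (sbox_mem p he)
    have f1 := g3 q.1 ⟨q1, by linarith⟩
    have f2 := g4 q.2 ⟨q3, by linarith⟩
    have r1 := g1 w.1 hw1 (by linarith)
    have r2 := g2 w.2 hw2 (by linarith)
    refine hw ⟨⟨r1.le, ?_⟩, r2.le, ?_⟩ hpB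
    · exact floor_close _ hk _ _ (by rw [hwi, ← f1, hi])
    · exact floor_close _ hk _ _ (by rw [hwj, ← f2, hj])
end

section
/- Let X ⊆ ℝ be such that (X[≤])² is a pseudo-normal topological space. If there exists a strictly decreasing bijection f : X → X that is a homeomorphism of X with respect to the Euclidean subspace topology, then X is a λ-set. -/
/-- A set of reals `X` is a λ-set if every countable subset of `X` is a
relative `Gδ`-set in `X` with respect to the Euclidean subspace topology. -/
def IsLambdaSet (X : Set ℝ) : Prop :=
  ∀ A : Set ℝ, A ⊆ X → A.Countable → IsGδ (Subtype.val ⁻¹' A : Set X)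

/-- A topological space is pseudo-normal if any two disjoint closed sets, one
of which is countable, can be separated by disjoint open sets. -/
def PseudoNormalSpace (Z : Type*) [TopologicalSpace Z] : Prop :=
  ∀ A B : Set Z, IsClosed A → IsClosed B → A.Countable → Disjoint A B →
    ∃ U V : Set Z, IsOpen U ∧ IsOpen V ∧ A ⊆ U ∧ B ⊆ V ∧ Disjoint U V

open Topology in
theorem sorg_aux {t : Set ℝ} (ht : IsOpen[sorgenfrey] t) :
    ∀ x ∈ t, ∃ ε : ℝ, 0 < ε ∧ ∀ y, x ≤ y → y < x + ε → y ∈ t := by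
  have ht' : TopologicalSpace.GenerateOpen
    {s : Set ℝ | ∃ a b : ℝ, a < b ∧ s = Set.Ico a b} t := ht
  induction ht' with
  | basic s hs =>
    obtain ⟨a, b, hab, rfl⟩ := hs
    intro x hx
    exact ⟨b - x, by linarith [hx.2], fun y h1 h2 => ⟨hx.1.trans h1, by linarith⟩⟩
  | univ => intro x _; exact ⟨1, one_pos, fun _ _ _ => trivial⟩
  | inter s t hs ht2 ih1 ih2 =>
    intro x hx
    obtain ⟨e1, h1, h1'⟩ := ih1 hs x hx.1
    obtain ⟨e2, h2, h2'⟩ := ih2 ht2 x hx.2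
    refine ⟨min e1 e2, lt_min h1 h2, fun y hy hy' => ⟨h1' y hy ?_, h2' y hy ?_⟩⟩
    · linarith [min_le_left e1 e2]
    · linarith [min_le_right e1 e2]
  | sUnion S hS ih =>
    rintro x ⟨s, hs, hx⟩
    obtain ⟨e, he, h⟩ := ih s hs (hS s hs) x hx
    exact ⟨e, he, fun y h1 h2 => ⟨s, hs, h y h1 h2⟩⟩

theorem sorgSub_ico (X : Set ℝ) (x : X) (e : ℝ) (he : 0 < e) :
    @IsOpen X (sorgenfreySub X) {y | (x : ℝ) ≤ y ∧ (y : ℝ) < x + e} :=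
  (@isOpen_induced_iff _ _ sorgenfrey _ _).2
    ⟨Set.Ico (x : ℝ) (x + e), TopologicalSpace.GenerateOpen.basic _
      ⟨x, x + e, by linarith, rfl⟩, rfl⟩

theorem sorgSq_open (X : Set ℝ) (W : Set (X × X)) :
    @IsOpen _ (sorgenfreySq X) W ↔ ∀ p q : X, (p, q) ∈ W → ∃ ε : ℝ, 0 < ε ∧
      ∀ x y : X, (p : ℝ) ≤ x → (x : ℝ) < p + ε → (q : ℝ) ≤ y → (y : ℝ) < q + ε → (x, y) ∈ W := by
  refine (@isOpen_prod_iff X X (sorgenfreySub X) (sorgenfreySub X) W).trans ?_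
  constructor
  · intro h p q hpq
    obtain ⟨u, v, hu, hv, hpu, hqv, huv⟩ := h p q hpq
    obtain ⟨u', hu', rfl⟩ := (@isOpen_induced_iff _ _ sorgenfrey _ _).1 hu
    obtain ⟨v', hv', rfl⟩ := (@isOpen_induced_iff _ _ sorgenfrey _ _).1 hv
    obtain ⟨e1, h1, h1'⟩ := sorg_aux hu' p hpu
    obtain ⟨e2, h2, h2'⟩ := sorg_aux hv' q hqv
    refine ⟨min e1 e2, lt_min h1 h2, fun x y a b c d => huv ⟨h1' x a ?_, h2' y c ?_⟩⟩
    · linarith [min_le_left e1 e2]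
    · linarith [min_le_right e1 e2]
  · intro h p q hpq
    obtain ⟨e, he, h'⟩ := h p q hpq
    refine ⟨_, _, sorgSub_ico X p e he, sorgSub_ico X q e he, ⟨le_rfl, by linarith⟩,
      ⟨le_rfl, by linarith⟩, ?_⟩
    rintro ⟨x, y⟩ ⟨hx, hy⟩
    exact h' x y hx.1 hx.2 hy.1 hy.2

theorem graph_closed_s15 (X : Set ℝ) (f : X ≃ₜ X)
    (hf : ∀ x y : X, (x : ℝ) < (y : ℝ) → (f y : ℝ) < (f x : ℝ)) (T : Set X) :
    @IsClosed _ (sorgenfreySq X) {z | z.1 ∈ T ∧ z.2 = f z.1} := by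
  refine (@isOpen_compl_iff _ _ (sorgenfreySq X)).1 ?_
  rw [sorgSq_open]
  intro p q hpq
  by_cases hq : q = f p
  · refine ⟨1, one_pos, ?_⟩
    rintro x y hx - hy - ⟨hT, hxy⟩
    simp only at hT hxy
    rcases hx.lt_or_eq with h | h
    · have := hf p x h
      rw [hxy, hq] at hy
      linarith
    · have : p = x := Subtype.ext h
      subst this
      exact hpq ⟨hT, hq⟩
  · have hc : IsOpen {z : X × X | z.2 ≠ f z.1} :=
      isOpen_ne_fun continuous_snd (f.continuous.comp continuous_fst)
    obtain ⟨e, he, h⟩ := Metric.isOpen_iff.1 hc (p, q) hq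
    refine ⟨e, he, fun x y h1 h2 h3 h4 h5 => ?_⟩
    have : (x, y) ∈ Metric.ball (p, q) e := by
      rw [Metric.mem_ball, Prod.dist_eq, max_lt_iff]
      simp only [Subtype.dist_eq, Real.dist_eq]
      constructor <;> rw [abs_lt] <;> constructor <;> linarith
    exact h this h5.2

theorem stmt15 (X : Set ℝ)
    (hpn : @PseudoNormalSpace (X × X) (sorgenfreySq X))
    (f : X ≃ₜ X)
    (hf : ∀ x y : X, (x : ℝ) < (y : ℝ) → (f y : ℝ) < (f x : ℝ)) :
    IsLambdaSet X := by
  intro A0 hA0 hcount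
  set A : Set X := Subtype.val ⁻¹' A0 with hA
  have hAc : A.Countable := hcount.preimage Subtype.val_injective
  obtain ⟨U, V, hU, hV, hAU, hBV, hUV⟩ := hpn _ _ (graph_closed_s15 X f hf A)
    (graph_closed_s15 X f hf Aᶜ)
    ((hAc.image fun x => (x, f x)).mono (by
      rintro ⟨x, y⟩ ⟨h1, h2⟩
      simp only at h1 h2
      exact ⟨x, h1, by rw [h2]⟩))
    (Set.disjoint_left.2 fun z h1 h2 => h2.1 h1.1)
  rw [sorgSq_open] at hU hV
  let N : ℕ → Set X := fun n => {p | ∀ x y : X, (p : ℝ) ≤ x → (x : ℝ) < p + 1 / ((n : ℝ) + 1) →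
    (f p : ℝ) ≤ y → (y : ℝ) < f p + 1 / ((n : ℝ) + 1) → (x, y) ∈ V}
  have key : ∀ n, ∀ a ∈ A, a ∉ closure (N n) := by
    intro n a ha hcl
    obtain ⟨e, he, hUa⟩ := hU a (f a) (hAU ⟨ha, rfl⟩)
    have hn : (0 : ℝ) < 1 / ((n : ℝ) + 1) := by positivity
    have hd : 0 < min e (1 / ((n : ℝ) + 1)) := lt_min he hn
    have hnb : ∀ᶠ x in nhds a, dist (f x) (f a) < min e (1 / ((n : ℝ) + 1)) ∧
        dist x a < min e (1 / ((n : ℝ) + 1)) :=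
      (f.continuous.continuousAt.eventually (Metric.ball_mem_nhds _ hd)).and
        (Metric.ball_mem_nhds _ hd)
    obtain ⟨x, hxN, h1, h2⟩ := ((mem_closure_iff_frequently.1 hcl).and_eventually hnb).exists
    rw [Subtype.dist_eq, Real.dist_eq, lt_min_iff, abs_lt, abs_lt] at h1 h2
    obtain ⟨⟨_, _⟩, _, _⟩ := h1
    obtain ⟨⟨_, _⟩, _, _⟩ := h2
    rcases le_total (x : ℝ) a with h | h
    · have h' : (f a : ℝ) ≤ f x := by
        rcases h.lt_or_eq with h | h
        · exact (hf _ _ h).le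
        · rw [Subtype.ext h]
      exact Set.disjoint_left.1 hUV (hUa a (f x) le_rfl (by linarith) h' (by linarith))
        (hxN a (f x) h (by linarith) le_rfl (by linarith))
    · have h' : (f x : ℝ) ≤ f a := by
        rcases h.lt_or_eq with h | h
        · exact (hf _ _ h).le
        · rw [Subtype.ext h]
      exact Set.disjoint_left.1 hUV (hUa x (f a) h (by linarith) le_rfl (by linarith))
        (hxN x (f a) le_rfl (by linarith) h' (by linarith))
  have hEq : A = ⋂ n, (closure (N n))ᶜ := by
    ext a
    simp only [Set.mem_iInter, Set.mem_compl_iff]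
    refine ⟨fun ha n => key n a ha, fun h => ?_⟩
    by_contra ha
    obtain ⟨e, he, hVa⟩ := hV a (f a) (hBV ⟨ha, rfl⟩)
    obtain ⟨n, hn⟩ := exists_nat_one_div_lt he
    exact h n (subset_closure fun x y h1 h2 h3 h4 =>
      hVa x y h1 (by linarith) h3 (by linarith))
  rw [hEq]
  exact IsGδ.iInter fun n => isClosed_closure.isOpen_compl.isGδ
end
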